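/- arXiv:1903.11953 — 2 statements merged into one kernel-verified Lean document; each statement's English description precedes it below -/
import Mathlib

section
/- Let p_n, p ∈ [1,∞] with p_n → p (i.e. 1/p_n → 1/p, convention 1/∞ = 0) and let α_n → α ∈ (0,∞). Then for every u ∈ BV(Q), the sequence α_n TV_{p_n}(u) converges and lim_{n→∞} α_n TV_{p_n}(u) = α TV_p(u). -/
/-!
The `ℓ^q` norms on `ℝ^N` are comparable with a constant depending only on the exponents' reciprocals:
`|x|_{q'} ≤ N ^ |1/q - 1/q'| * |x|_q` (monotonicity in the exponent one way, Jensen's inequality the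
other way; see `lpNorm_inv_smul_le_one`). Since `1/p* = 1 - 1/p`, scaling a test field for `TV_p` by
`N ^ (-|1/p - 1/p'|)` gives a test field for `TV_{p'}`, so `TV_p u ≤ N ^ |1/p - 1/p'| * TV_{p'} u`
(`TV_le_rpow_mul_TV`). When `1/p_n → 1/p` these constants tend to `1`, and `TV_{p_n} u` is squeezed
between `N ^ (-|1/p_n - 1/p|) * TV_p u` and `N ^ |1/p_n - 1/p| * TV_p u`.
-/

open MeasureTheory Filter Topology ENNReal

noncomputable section

/-- The open unit cube `Q = (0,1)^N ⊆ ℝ^N`. -/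
def Q (N : ℕ) : Set (Fin N → ℝ) := Set.univ.pi fun _ => Set.Ioo (0 : ℝ) 1

/-- Lebesgue measure restricted to the unit cube. -/
def μQ (N : ℕ) : Measure (Fin N → ℝ) := volume.restrict (Q N)

/-- The `ℓ^p` norm on `ℝ^N`, for `p ∈ [1,∞]`. -/
def lpNorm {N : ℕ} (p : ℝ≥0∞) (x : Fin N → ℝ) : ℝ :=
  if p = ∞ then ⨆ i, |x i| else (∑ i, |x i| ^ p.toReal) ^ (1 / p.toReal)

/-- The Hölder conjugate exponent `p*`, so that `1/p + 1/p* = 1` (with `1/∞ = 0`). -/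
def dualExp (p : ℝ≥0∞) : ℝ≥0∞ :=
  if p = 1 then ∞ else if p = ∞ then 1 else ENNReal.ofReal (p.toReal / (p.toReal - 1))

/-- Divergence of a vector field on `ℝ^N`. -/
def diverg {N : ℕ} (φ : (Fin N → ℝ) → (Fin N → ℝ)) (x : Fin N → ℝ) : ℝ :=
  ∑ i, fderiv ℝ φ x (Pi.single i 1) i

/-- Admissible test vector fields for `TV_p`: smooth, compactly supported inside `Q`,
with pointwise dual `ℓ^{p*}` norm at most `1`. -/
def IsTest (N : ℕ) (p : ℝ≥0∞) (φ : (Fin N → ℝ) → (Fin N → ℝ)) : Prop :=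
  ContDiff ℝ (⊤ : ℕ∞) φ ∧ HasCompactSupport φ ∧ tsupport φ ⊆ Q N ∧
    ∀ x, lpNorm (dualExp p) (φ x) ≤ 1

/-- The `ℓ^p`-anisotropic total variation on `Q`, valued in `[0,∞]`:
`TV_p(u) = sup { ∫_Q u div φ : φ ∈ C_c^∞(Q;ℝ^N), |φ|_{p*} ≤ 1 }`. -/
def TV (N : ℕ) (p : ℝ≥0∞) (u : (Fin N → ℝ) → ℝ) : ℝ≥0∞ :=
  ⨆ (φ : (Fin N → ℝ) → (Fin N → ℝ)) (_ : IsTest N p φ),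
    ENNReal.ofReal (∫ x in Q N, u x * diverg φ x)

/-- `u ∈ BV(Q)`: `u ∈ L¹(Q)` and `TV₂(u) < ∞`. -/
def MemBV (N : ℕ) (u : (Fin N → ℝ) → ℝ) : Prop :=
  MeasureTheory.IntegrableOn u (Q N) ∧ TV N 2 u < ∞

/-- The `BV` norm `‖u‖_{L¹(Q)} + TV₂(u)`. -/
def bvNorm (N : ℕ) (u : (Fin N → ℝ) → ℝ) : ℝ≥0∞ :=
  eLpNorm u 1 (μQ N) + TV N 2 u

/-- The ROF functional `‖u − f‖²_{L²(Q)} + α · TV_p(u)`. -/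
def rof (N : ℕ) (f : (Fin N → ℝ) → ℝ) (α : ℝ) (p : ℝ≥0∞)
    (u : (Fin N → ℝ) → ℝ) : ℝ≥0∞ :=
  (eLpNorm (u - f) 2 (μQ N)) ^ 2 + ENNReal.ofReal α * TV N p u

/-- `u` minimizes the ROF functional over `BV(Q)`. -/
def IsMinimizer (N : ℕ) (f : (Fin N → ℝ) → ℝ) (α : ℝ) (p : ℝ≥0∞)
    (u : (Fin N → ℝ) → ℝ) : Prop :=
  MemBV N u ∧ ∀ v, MemBV N v → rof N f α p u ≤ rof N f α p v

/-- `u` is the (a.e.-unique) minimizer of the ROF functional over `BV(Q)`. -/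
def IsUniqueMinimizer (N : ℕ) (f : (Fin N → ℝ) → ℝ) (α : ℝ) (p : ℝ≥0∞)
    (u : (Fin N → ℝ) → ℝ) : Prop :=
  IsMinimizer N f α p u ∧ ∀ v, IsMinimizer N f α p v → v =ᵐ[μQ N] u

lemma lpNorm_top_le_one_iff {N : ℕ} (x : Fin N → ℝ) :
    lpNorm ∞ x ≤ 1 ↔ ∀ i, |x i| ≤ 1 := by
  simp only [_root_.lpNorm, if_true]
  exact ⟨fun h i => (le_ciSup (Set.finite_range fun i => |x i|).bddAbove i).trans h,
    fun h => Real.iSup_le h zero_le_one⟩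

lemma lpNorm_le_one_iff_of_ne_top {N : ℕ} {q : ℝ≥0∞} (hq : 1 ≤ q) (hq' : q ≠ ∞)
    (x : Fin N → ℝ) : lpNorm q x ≤ 1 ↔ ∑ i, |x i| ^ q.toReal ≤ 1 := by
  have hpos : 0 < q.toReal := toReal_pos (zero_lt_one.trans_le hq).ne' hq'
  have hS : 0 ≤ ∑ i, |x i| ^ q.toReal :=
    Finset.sum_nonneg fun i _ => Real.rpow_nonneg (abs_nonneg _) _
  simp only [_root_.lpNorm, hq', if_false]
  constructor
  · intro h
    by_contra! hlt
    exact absurd h (not_le.2 (Real.one_lt_rpow hlt (one_div_pos.2 hpos)))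
  · intro h
    exact Real.rpow_le_one hS h (one_div_pos.2 hpos).le

lemma lpNorm_le_one_of_abs_le {N : ℕ} {q : ℝ≥0∞} (hq : 1 ≤ q) {x y : Fin N → ℝ}
    (hxy : ∀ i, |y i| ≤ |x i|) (hx : lpNorm q x ≤ 1) : lpNorm q y ≤ 1 := by
  by_cases hq' : q = ∞
  · subst hq'
    rw [lpNorm_top_le_one_iff] at *
    exact fun i => (hxy i).trans (hx i)
  · rw [lpNorm_le_one_iff_of_ne_top hq hq'] at *
    refine (Finset.sum_le_sum fun i _ => ?_).trans hx
    exact Real.rpow_le_rpow (abs_nonneg _) (hxy i) toReal_nonneg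

lemma abs_le_one_of_lpNorm_le_one {N : ℕ} {q : ℝ≥0∞} (hq : 1 ≤ q) {x : Fin N → ℝ}
    (hx : lpNorm q x ≤ 1) (i : Fin N) : |x i| ≤ 1 := by
  by_cases hq' : q = ∞
  · subst hq'
    exact (lpNorm_top_le_one_iff x).1 hx i
  · rw [lpNorm_le_one_iff_of_ne_top hq hq'] at hx
    have hpos : 0 < q.toReal := toReal_pos (zero_lt_one.trans_le hq).ne' hq'
    have h1 : |x i| ^ q.toReal ≤ 1 := le_trans (Finset.single_le_sum
      (f := fun i => |x i| ^ q.toReal)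
      (fun i _ => Real.rpow_nonneg (abs_nonneg _) _) (Finset.mem_univ i)) hx
    by_contra! hlt
    exact absurd h1 (not_le.2 (Real.one_lt_rpow hlt hpos))

/-- The unit balls of the `ℓ^q` norms increase with `q`. -/
lemma lpNorm_le_one_mono {N : ℕ} {q q' : ℝ≥0∞} (hq : 1 ≤ q) (hqq' : q ≤ q')
    {x : Fin N → ℝ} (hx : lpNorm q x ≤ 1) : lpNorm q' x ≤ 1 := by
  have habs := abs_le_one_of_lpNorm_le_one hq hx
  by_cases hq'top : q' = ∞
  · subst hq'top
    exact (lpNorm_top_le_one_iff x).2 habs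
  · have hqtop : q ≠ ∞ := ne_top_of_le_ne_top hq'top hqq'
    have hpos : 0 < q.toReal := toReal_pos (zero_lt_one.trans_le hq).ne' hqtop
    rw [lpNorm_le_one_iff_of_ne_top hq hqtop] at hx
    rw [lpNorm_le_one_iff_of_ne_top (hq.trans hqq') hq'top]
    refine (Finset.sum_le_sum fun i _ => ?_).trans hx
    exact Real.rpow_le_rpow_of_exponent_ge_of_imp (abs_nonneg _) (habs i)
      (toReal_mono hq'top hqq') (fun _ h => absurd h (hpos.trans_le (toReal_mono hq'top hqq')).ne')

lemma sum_abs_smul_rpow {N : ℕ} {c : ℝ} (hc : 0 ≤ c) (r : ℝ) (x : Fin N → ℝ) :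
    ∑ i, |(c • x) i| ^ r = c ^ r * ∑ i, |x i| ^ r := by
  rw [Finset.mul_sum]
  refine Finset.sum_congr rfl fun i _ => ?_
  rw [Pi.smul_apply, smul_eq_mul, abs_mul, abs_of_nonneg hc, Real.mul_rpow hc (abs_nonneg _)]

/-- The reverse comparison of unit balls, which follows from Jensen's inequality for
`t ↦ t ^ (q'/q)` when `q' < ∞`, and from bounding each summand by `1` when `q' = ∞`. -/
lemma lpNorm_inv_smul_le_one_of_le {N : ℕ} (hN : 1 ≤ N) {q q' : ℝ≥0∞} (hq : 1 ≤ q)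
    (hqq' : q ≤ q') {x : Fin N → ℝ} (hx : lpNorm q' x ≤ 1) :
    lpNorm q (((N : ℝ) ^ (q.toReal⁻¹ - q'.toReal⁻¹))⁻¹ • x) ≤ 1 := by
  have hN0 : (0 : ℝ) < N := by exact_mod_cast hN
  by_cases hqtop : q = ∞
  · subst hqtop
    obtain rfl : q' = ∞ := top_le_iff.1 hqq'
    simpa using hx
  have hr : 0 < q.toReal := toReal_pos (zero_lt_one.trans_le hq).ne' hqtop
  rw [lpNorm_le_one_iff_of_ne_top hq hqtop, sum_abs_smul_rpow (by positivity),
    Real.inv_rpow (by positivity), inv_mul_le_iff₀ (by positivity), mul_one,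
    ← Real.rpow_mul hN0.le]
  by_cases hq'top : q' = ∞
  · subst hq'top
    have habs := (lpNorm_top_le_one_iff x).1 hx
    calc ∑ i, |x i| ^ q.toReal ≤ ∑ _i : Fin N, (1 : ℝ) :=
          Finset.sum_le_sum fun i _ => Real.rpow_le_one (abs_nonneg _) (habs i) hr.le
      _ = (N : ℝ) ^ ((q.toReal⁻¹ - (∞ : ℝ≥0∞).toReal⁻¹) * q.toReal) := by
          simp [inv_mul_cancel₀ hr.ne']
  · have hr' : 0 < q'.toReal := hr.trans_le (toReal_mono hq'top hqq')
    rw [lpNorm_le_one_iff_of_ne_top (hq.trans hqq') hq'top] at hx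
    set r := q.toReal
    set r' := q'.toReal
    have hrr' : r ≤ r' := toReal_mono hq'top hqq'
    have hS : 0 ≤ ∑ i, |x i| ^ r :=
      Finset.sum_nonneg fun i _ => Real.rpow_nonneg (abs_nonneg _) _
    have hJ := Real.rpow_sum_le_const_mul_sum_rpow (Finset.univ : Finset (Fin N))
      (fun i => |x i| ^ r) (p := r' / r) ((one_le_div hr).2 hrr')
    have hterm : ∀ i, |(|x i| ^ r)| ^ (r' / r) = |x i| ^ r' := fun i => by
      rw [abs_of_nonneg (Real.rpow_nonneg (abs_nonneg _) _), ← Real.rpow_mul (abs_nonneg _),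
        mul_div_cancel₀ _ hr.ne']
    have habs : ∀ i, |(|x i| ^ r)| = |x i| ^ r := fun i =>
      abs_of_nonneg (Real.rpow_nonneg (abs_nonneg _) _)
    simp only [hterm] at hJ
    simp only [habs, Finset.card_univ, Fintype.card_fin] at hJ
    have hJ' : (∑ i, |x i| ^ r) ^ (r' / r) ≤ (N : ℝ) ^ (r' / r - 1) :=
      hJ.trans (mul_le_of_le_one_right (by positivity) hx)
    have := Real.rpow_le_rpow (by positivity) hJ' (div_pos hr hr').le
    rw [← Real.rpow_mul hS, ← Real.rpow_mul hN0.le, div_mul_div_cancel₀ hr.ne',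
      div_self hr'.ne', Real.rpow_one] at this
    have he : (r' / r - 1) * (r / r') = (r⁻¹ - r'⁻¹) * r := by
      field_simp
    rwa [he] at this

lemma toReal_inv_anti {q q' : ℝ≥0∞} (hq : 1 ≤ q) (hqq' : q ≤ q') :
    q'.toReal⁻¹ ≤ q.toReal⁻¹ := by
  rw [← toReal_inv, ← toReal_inv]
  exact toReal_mono (ENNReal.inv_ne_top.2 (zero_lt_one.trans_le hq).ne') (ENNReal.inv_le_inv.2 hqq')

/-- The norm comparison `|x|_{q'} ≤ N ^ |1/q - 1/q'| * |x|_q`, phrased for unit balls. -/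
lemma lpNorm_inv_smul_le_one {N : ℕ} (hN : 1 ≤ N) {q q' : ℝ≥0∞} (hq : 1 ≤ q) (hq' : 1 ≤ q')
    {x : Fin N → ℝ} (hx : lpNorm q x ≤ 1) :
    lpNorm q' (((N : ℝ) ^ |q.toReal⁻¹ - q'.toReal⁻¹|)⁻¹ • x) ≤ 1 := by
  rcases le_total q q' with h | h
  · have hc : (1 : ℝ) ≤ (N : ℝ) ^ |q.toReal⁻¹ - q'.toReal⁻¹| :=
      Real.one_le_rpow (by exact_mod_cast hN) (abs_nonneg _)
    refine lpNorm_le_one_of_abs_le hq' (fun i => ?_) (lpNorm_le_one_mono hq h hx)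
    rw [Pi.smul_apply, smul_eq_mul, abs_mul, abs_of_nonneg (by positivity)]
    exact mul_le_of_le_one_left (abs_nonneg _) (inv_le_one_of_one_le₀ hc)
  · rw [abs_sub_comm, abs_of_nonneg (sub_nonneg.2 (toReal_inv_anti hq' h))]
    exact lpNorm_inv_smul_le_one_of_le hN hq' h hx

lemma one_lt_toReal {p : ℝ≥0∞} (hp : 1 ≤ p) (h1 : p ≠ 1) (ht : p ≠ ∞) : 1 < p.toReal := by
  simpa using (toReal_lt_toReal one_ne_top ht).2 (lt_of_le_of_ne hp h1.symm)

lemma one_le_dualExp {p : ℝ≥0∞} (hp : 1 ≤ p) : 1 ≤ dualExp p := by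
  unfold dualExp
  split_ifs with h1 ht
  · exact le_top
  · exact le_rfl
  · have h := one_lt_toReal hp h1 ht
    rw [one_le_ofReal, one_le_div (by linarith)]
    linarith

lemma dualExp_toReal_inv {p : ℝ≥0∞} (hp : 1 ≤ p) :
    (dualExp p).toReal⁻¹ = 1 - p.toReal⁻¹ := by
  unfold dualExp
  split_ifs with h1 ht
  · simp [h1]
  · simp [ht]
  · have h := one_lt_toReal hp h1 ht
    have h' : 0 < p.toReal - 1 := by linarith
    rw [toReal_ofReal (by positivity)]
    field_simp

lemma diverg_const_smul {N : ℕ} (c : ℝ) {φ : (Fin N → ℝ) → (Fin N → ℝ)}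
    (hφ : ContDiff ℝ (⊤ : ℕ∞) φ) (x : Fin N → ℝ) :
    diverg (c • φ) x = c * diverg φ x := by
  have hd : DifferentiableAt ℝ φ x := (hφ.differentiable (by simp)) x
  simp [diverg, fderiv_const_smul hd, Finset.mul_sum]

/-- Total variations for different exponents are comparable, with a constant that tends to `1` as
the reciprocals of the exponents approach each other. -/
lemma TV_le_rpow_mul_TV {N : ℕ} (hN : 1 ≤ N) {p p' : ℝ≥0∞} (hp : 1 ≤ p) (hp' : 1 ≤ p')
    (u : (Fin N → ℝ) → ℝ) :
    TV N p u ≤ ENNReal.ofReal ((N : ℝ) ^ |p.toReal⁻¹ - p'.toReal⁻¹|) * TV N p' u := by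
  have hN0 : (0 : ℝ) < N := by exact_mod_cast hN
  set c : ℝ := (N : ℝ) ^ |p.toReal⁻¹ - p'.toReal⁻¹| with hc
  have hc0 : 0 < c := by positivity
  refine iSup₂_le fun φ hφ => ?_
  obtain ⟨hsm, hcs, hsup, hle⟩ := hφ
  have htest : IsTest N p' (c⁻¹ • φ) := by
    refine ⟨contDiff_const.smul hsm, hcs.smul_left (f := fun _ => c⁻¹),
      (tsupport_smul_subset_right (fun _ => c⁻¹) φ).trans hsup, fun x => ?_⟩
    have h := lpNorm_inv_smul_le_one hN (one_le_dualExp hp) (one_le_dualExp hp') (hle x)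
    have he : |(dualExp p).toReal⁻¹ - (dualExp p').toReal⁻¹| = |p.toReal⁻¹ - p'.toReal⁻¹| := by
      rw [dualExp_toReal_inv hp, dualExp_toReal_inv hp', abs_sub_comm]
      congr 1
      ring
    rw [he] at h
    exact h
  have hint : ∫ x in Q N, u x * diverg φ x = c * ∫ x in Q N, u x * diverg (c⁻¹ • φ) x := by
    rw [← integral_const_mul]
    congr 1 with x
    rw [diverg_const_smul _ hsm]
    field_simp
  rw [hint, ofReal_mul hc0.le]
  gcongr
  exact le_iSup₂_of_le (c⁻¹ • φ) htest le_rfl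

/-- If `p_n → p` in `[1,∞]` (i.e. `1/p_n → 1/p`) and `α_n → α ∈ (0,∞)`,
then for every `u ∈ BV(Q)`, `α_n TV_{p_n}(u) → α TV_p(u)`. -/
theorem tv_pointwise_convergence (N : ℕ) (hN : 1 ≤ N)
    (pn : ℕ → ℝ≥0∞) (p : ℝ≥0∞) (hpn : ∀ n, 1 ≤ pn n) (hp : 1 ≤ p)
    (hpconv : Tendsto (fun n => (pn n).toReal⁻¹) atTop (𝓝 p.toReal⁻¹))
    (αn : ℕ → ℝ) (α : ℝ) (hαn : ∀ n, 0 < αn n) (hα : 0 < α)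
    (hαconv : Tendsto αn atTop (𝓝 α))
    (u : (Fin N → ℝ) → ℝ) (hu : MemBV N u) :
    Tendsto (fun n => ENNReal.ofReal (αn n) * TV N (pn n) u) atTop
      (𝓝 (ENNReal.ofReal α * TV N p u)) := by
  have hN0 : (0 : ℝ) < N := by exact_mod_cast hN
  set c : ℕ → ℝ := fun n => (N : ℝ) ^ |(pn n).toReal⁻¹ - p.toReal⁻¹| with hcdef
  have hc0 : ∀ n, 0 < c n := fun n => by simp only [hcdef]; positivity
  have hd : Tendsto (fun n => |(pn n).toReal⁻¹ - p.toReal⁻¹|) atTop (𝓝 0) := by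
    simpa using (hpconv.sub_const p.toReal⁻¹).abs
  have hc : Tendsto c atTop (𝓝 1) := by
    simpa using (tendsto_const_nhds (x := (N : ℝ))).rpow hd (Or.inl hN0.ne')
  have hup : Tendsto (fun n => ENNReal.ofReal (c n) * TV N p u) atTop (𝓝 (TV N p u)) := by
    simpa using ENNReal.Tendsto.mul_const (b := TV N p u) (tendsto_ofReal hc)
      (Or.inl (by simp))
  have hlow : Tendsto (fun n => ENNReal.ofReal (c n)⁻¹ * TV N p u) atTop (𝓝 (TV N p u)) := by
    simpa using ENNReal.Tendsto.mul_const (b := TV N p u)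
      (tendsto_ofReal (hc.inv₀ one_ne_zero)) (Or.inl (by simp))
  have hTV : Tendsto (fun n => TV N (pn n) u) atTop (𝓝 (TV N p u)) := by
    refine tendsto_of_tendsto_of_tendsto_of_le_of_le hlow hup (fun n => ?_)
      (fun n => TV_le_rpow_mul_TV hN (hpn n) hp u)
    have h := TV_le_rpow_mul_TV hN hp (hpn n) u
    rw [abs_sub_comm] at h
    calc ENNReal.ofReal (c n)⁻¹ * TV N p u
        ≤ ENNReal.ofReal (c n)⁻¹ * (ENNReal.ofReal (c n) * TV N (pn n) u) := by gcongr
      _ = TV N (pn n) u := by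
          rw [← mul_assoc, ← ofReal_mul (inv_pos.2 (hc0 n)).le, inv_mul_cancel₀ (hc0 n).ne',
            ofReal_one, one_mul]
  have hTVtop : TV N p u ≠ ∞ :=
    ne_top_of_le_ne_top (mul_ne_top ofReal_ne_top hu.2.ne)
      (TV_le_rpow_mul_TV hN hp (p' := 2) (by norm_num) u)
  exact ENNReal.Tendsto.mul (tendsto_ofReal hαconv) (Or.inl (by simpa using hα)) hTV
    (Or.inr ofReal_ne_top)

end
end

section
/- Let u_η ∈ BV(Q), let A > 0, and let (α₁,p₁), (α₂,p₂) ∈ [0,A] × [1,∞]. For α > 0 let u_{α,p} denote the minimizer over BV(Q) of u ↦ ‖u − u_η‖²_{L²(Q)} + α TV_p(u), and set u_{0,p} := u_η. Then ‖u_{α₂,p₂} − u_{α₁,p₁}‖_{L²(Q)} ≤ ( |α₁ − α₂|^{1/2} + 2 ( A (1 − N^{−|1/p₂ − 1/p₁|}) )^{1/2} ) · ( TV_1(u_η) )^{1/2}. -/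
/-! The proof compares the two functionals `E_i(u) = ‖u - f‖² + α_i TV_{p_i}(u)` directly at the two
minimizers, so no intermediate minimizer `u_{α₁,p₂}` has to be constructed.

Each `E_i` is strongly convex, hence `E_i(v) ≥ E_i(u_i) + ‖v - u_i‖²` for every competitor `v`
(`rof_variational`; it holds trivially when `α_i = 0` and `u_i = f`). Testing `E₁` with `u₂` and
`E₂` with `u₁` and adding up, with `a_{ij} = TV_{p_i}(u_j)`,
`2 ‖u₂ - u₁‖² ≤ α₁ (a₁₂ - a₁₁) + α₂ (a₂₁ - a₂₂)`.

Let `p₁ ≤ p₂`, let `c = N^{-(1/p₁ - 1/p₂)}` and let `T = TV_1(f)`. Comparing the `ℓ^p` norms on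
test fields gives `c TV_{p₁} ≤ TV_{p₂} ≤ TV_{p₁}` (`TV_anti`, `TV_scale`), and testing `E_i` with `f`
gives `a_{ii} ≤ T`. If `c ≥ 1/2`, then `a₁₂ ≤ 2T`, and the displayed inequality yields
`‖u₂ - u₁‖² ≤ (|α₁ - α₂| + 4 A (1 - c)) T`. If `c < 1/2`, the same bound follows from
`2 ‖u_i - f‖² ≤ α_i T` and `‖u₂ - u₁‖² ≤ 2 ‖u₁ - f‖² + 2 ‖u₂ - f‖²`, because `1 - c ≥ 1/2`. Taking
square roots concludes (`stability_aux`); the case `p₂ ≤ p₁` is symmetric. -/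

open MeasureTheory Filter Topology ENNReal

noncomputable section

/-! ### Finite-dimensional norms and conjugate exponents -/

lemma rpow_le_one_iff_base {x z : ℝ} (hx : 0 ≤ x) (hz : 0 < z) : x ^ z ≤ 1 ↔ x ≤ 1 := by
  simpa using Real.rpow_le_rpow_iff hx zero_le_one hz

lemma lpNorm_top_le_one {N : ℕ} (hN : 1 ≤ N) (x : Fin N → ℝ) :
    lpNorm ∞ x ≤ 1 ↔ ∀ i, |x i| ≤ 1 := by
  have : Nonempty (Fin N) := ⟨⟨0, hN⟩⟩
  simp only [_root_.lpNorm, if_true]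
  exact ciSup_le_iff (Set.finite_range _).bddAbove

lemma lpNorm_le_one {N : ℕ} {p : ℝ≥0∞} (hp : p ≠ ∞) (h1 : 1 ≤ p.toReal) (x : Fin N → ℝ) :
    lpNorm p x ≤ 1 ↔ ∑ i, |x i| ^ p.toReal ≤ 1 := by
  have h0 : 0 ≤ ∑ i, |x i| ^ p.toReal :=
    Finset.sum_nonneg fun i _ => Real.rpow_nonneg (abs_nonneg _) _
  simp only [_root_.lpNorm, if_neg hp]
  exact rpow_le_one_iff_base h0 (by positivity)

lemma one_le_toReal {p : ℝ≥0∞} (hp : p ≠ ∞) (h1 : 1 ≤ p) : 1 ≤ p.toReal := by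
  simpa using ENNReal.toReal_mono hp h1

lemma eq_top_of_inv_toReal_le_zero {p : ℝ≥0∞} (h1 : 1 ≤ p) (h : p.toReal⁻¹ ≤ 0) : p = ∞ := by
  by_contra hp
  have := one_le_toReal hp h1
  have : 0 < p.toReal⁻¹ := by positivity
  linarith

lemma inv_toReal_le_one {p : ℝ≥0∞} (h1 : 1 ≤ p) : p.toReal⁻¹ ≤ 1 := by
  by_cases hp : p = ∞
  · simp [hp]
  · exact inv_le_one_of_one_le₀ (one_le_toReal hp h1)

/-- The unit ball of `ℓ^r` lies in that of `ℓ^s` when `r ≤ s`; the order of the exponents is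
expressed through their inverses, with `1/∞ = 0`. -/
lemma lpNorm_le_one_mono_s8 {N : ℕ} (hN : 1 ≤ N) {r s : ℝ≥0∞} (hr : 1 ≤ r) (hs : 1 ≤ s)
    (h : s.toReal⁻¹ ≤ r.toReal⁻¹) {x : Fin N → ℝ} (hx : lpNorm r x ≤ 1) : lpNorm s x ≤ 1 := by
  by_cases hr' : r = ∞
  · have : s = ∞ := eq_top_of_inv_toReal_le_zero hs (by simpa [hr'] using h)
    rwa [this, ← hr']
  have hr1 := one_le_toReal hr' hr
  rw [lpNorm_le_one hr' hr1] at hx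
  have hxi : ∀ i, |x i| ≤ 1 := by
    intro i
    have h1 : |x i| ^ r.toReal ≤ 1 :=
      (Finset.single_le_sum (f := fun i => |x i| ^ r.toReal)
        (fun i _ => Real.rpow_nonneg (abs_nonneg _) _) (Finset.mem_univ i)).trans hx
    exact (rpow_le_one_iff_base (abs_nonneg _) (by linarith)).1 h1
  by_cases hs' : s = ∞
  · rw [hs', lpNorm_top_le_one hN]
    exact hxi
  have hs1 := one_le_toReal hs' hs
  rw [lpNorm_le_one hs' hs1]
  refine le_trans (Finset.sum_le_sum fun i _ => ?_) hx
  have hrs : r.toReal ≤ s.toReal := (inv_le_inv₀ (by linarith) (by linarith)).1 h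
  exact Real.rpow_le_rpow_of_exponent_ge' (abs_nonneg _) (hxi i) (by linarith) hrs

/-- The power mean inequality `|x|_r ≤ N^{1/r - 1/s} |x|_s` for `r ≤ s`, on unit balls. -/
lemma lpNorm_le_one_scale {N : ℕ} (hN : 1 ≤ N) {r s : ℝ≥0∞} (hr : 1 ≤ r) (hs : 1 ≤ s)
    (h : s.toReal⁻¹ ≤ r.toReal⁻¹) {x : Fin N → ℝ} (hx : lpNorm s x ≤ 1) :
    lpNorm r (((N : ℝ) ^ (-(r.toReal⁻¹ - s.toReal⁻¹))) • x) ≤ 1 := by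
  have hN0 : (0 : ℝ) < N := by exact_mod_cast hN
  by_cases hr' : r = ∞
  · have : s = ∞ := eq_top_of_inv_toReal_le_zero hs (by simpa [hr'] using h)
    subst this; subst hr'
    simpa using hx
  have hr1 := one_le_toReal hr' hr
  rw [lpNorm_le_one hr' hr1]
  set ρ := r.toReal
  have hρ : 0 < ρ := by linarith
  set c := (N : ℝ) ^ (-(ρ⁻¹ - s.toReal⁻¹)) with hc
  have hc0 : 0 < c := Real.rpow_pos_of_pos hN0 _
  have e1 : ∑ i, |(c • x) i| ^ ρ = c ^ ρ * ∑ i, |x i| ^ ρ := by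
    rw [Finset.mul_sum]
    refine Finset.sum_congr rfl fun i _ => ?_
    rw [Pi.smul_apply, smul_eq_mul, abs_mul, abs_of_pos hc0,
      Real.mul_rpow hc0.le (abs_nonneg _)]
  have key : ∑ i, |x i| ^ ρ ≤ (N : ℝ) ^ (1 - ρ * s.toReal⁻¹) := by
    by_cases hs' : s = ∞
    · rw [hs', lpNorm_top_le_one hN] at hx
      have : ∑ i, |x i| ^ ρ ≤ ∑ _i : Fin N, (1 : ℝ) :=
        Finset.sum_le_sum fun i _ => Real.rpow_le_one (abs_nonneg _) (hx i) hρ.le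
      simpa [hs'] using this
    have hs1 := one_le_toReal hs' hs
    rw [lpNorm_le_one hs' hs1] at hx
    set σ := s.toReal
    have hσ : 0 < σ := by linarith
    have hrs : ρ ≤ σ := (inv_le_inv₀ hσ hρ).1 h
    have hpm := Real.rpow_arith_mean_le_arith_mean_rpow (Finset.univ : Finset (Fin N))
      (fun _ => (N : ℝ)⁻¹) (fun i => |x i| ^ ρ) (fun _ _ => by positivity)
      (by simp [hN0.ne']) (fun i _ => Real.rpow_nonneg (abs_nonneg _) _)
      (p := σ / ρ) ((one_le_div hρ).2 hrs)
    rw [← Finset.mul_sum, ← Finset.mul_sum] at hpm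
    have e2 : ∑ i, (|x i| ^ ρ) ^ (σ / ρ) = ∑ i, |x i| ^ σ := by
      refine Finset.sum_congr rfl fun i _ => ?_
      rw [← Real.rpow_mul (abs_nonneg _), mul_div_cancel₀ _ hρ.ne']
    rw [e2] at hpm
    set S := ∑ i, |x i| ^ ρ
    have hS : 0 ≤ S := Finset.sum_nonneg fun i _ => Real.rpow_nonneg (abs_nonneg _) _
    have h3 : ((N : ℝ)⁻¹ * S) ^ (σ / ρ) ≤ (N : ℝ)⁻¹ :=
      hpm.trans (mul_le_of_le_one_right (by positivity) hx)
    have h4 : (N : ℝ)⁻¹ * S ≤ ((N : ℝ)⁻¹) ^ (ρ / σ) := by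
      have := Real.rpow_le_rpow (by positivity) h3 (z := ρ / σ) (by positivity)
      rwa [← Real.rpow_mul (by positivity),
        show σ / ρ * (ρ / σ) = 1 by field_simp, Real.rpow_one] at this
    rw [Real.inv_rpow hN0.le, ← Real.rpow_neg hN0.le] at h4
    have h5 : S = N * ((N : ℝ)⁻¹ * S) := by field_simp
    rw [h5, sub_eq_add_neg, Real.rpow_add hN0, Real.rpow_one, ← div_eq_mul_inv]
    gcongr
  rw [e1]
  calc c ^ ρ * ∑ i, |x i| ^ ρ ≤ c ^ ρ * (N : ℝ) ^ (1 - ρ * s.toReal⁻¹) := by gcongr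
    _ = 1 := by
      rw [hc, ← Real.rpow_mul hN0.le, ← Real.rpow_add hN0]
      convert Real.rpow_zero (N : ℝ) using 2
      field_simp
      ring

lemma dualExp_spec {p : ℝ≥0∞} (hp : 1 ≤ p) :
    1 ≤ dualExp p ∧ (dualExp p).toReal⁻¹ = 1 - p.toReal⁻¹ := by
  unfold dualExp
  split_ifs with h1 h2
  · simp [h1]
  · simp [h2]
  · have h3 := one_le_toReal h2 hp
    have h4 : p.toReal ≠ 1 := fun h => h1 (by
      rw [← ENNReal.ofReal_toReal h2, h, ENNReal.ofReal_one])
    have h5 : 0 < p.toReal - 1 := by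
      have := lt_of_le_of_ne h3 (Ne.symm h4)
      linarith
    refine ⟨?_, ?_⟩
    · rw [ENNReal.one_le_ofReal, one_le_div h5]
      linarith
    · rw [ENNReal.toReal_ofReal (by positivity)]
      have : p.toReal ≠ 0 := by linarith
      field_simp

/-! ### Anisotropic total variations -/

lemma diverg_continuous {N : ℕ} {φ : (Fin N → ℝ) → (Fin N → ℝ)}
    (h : ContDiff ℝ (⊤ : ℕ∞) φ) : Continuous (diverg φ) := by
  have h1 : Continuous (fderiv ℝ φ) := h.continuous_fderiv (by simp)
  unfold diverg
  refine continuous_finsetSum _ fun i _ => ?_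
  exact (continuous_apply i).comp (h1.clm_apply continuous_const)

lemma diverg_bounded {N : ℕ} {φ : (Fin N → ℝ) → (Fin N → ℝ)}
    (h : ContDiff ℝ (⊤ : ℕ∞) φ) (hc : HasCompactSupport φ) : ∃ C, ∀ x, ‖diverg φ x‖ ≤ C := by
  have h1 : HasCompactSupport (diverg φ) :=
    (hc.fderiv (𝕜 := ℝ)).comp_left
      (g := fun L : (Fin N → ℝ) →L[ℝ] (Fin N → ℝ) => ∑ i, L (Pi.single i 1) i) (by simp)
  exact h1.exists_bound_of_continuous (diverg_continuous h)

lemma integrable_mul_diverg {N : ℕ} {u : (Fin N → ℝ) → ℝ} (hu : IntegrableOn u (Q N))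
    {φ : (Fin N → ℝ) → (Fin N → ℝ)} (h : ContDiff ℝ (⊤ : ℕ∞) φ) (hc : HasCompactSupport φ) :
    IntegrableOn (fun x => u x * diverg φ x) (Q N) := by
  obtain ⟨C, hC⟩ := diverg_bounded h hc
  exact Integrable.mul_bdd (c := C) hu (diverg_continuous h).aestronglyMeasurable
    (Eventually.of_forall hC)

lemma diverg_smul {N : ℕ} {φ : (Fin N → ℝ) → (Fin N → ℝ)}
    (h : ContDiff ℝ (⊤ : ℕ∞) φ) (c : ℝ) (x : Fin N → ℝ) :
    diverg (fun y => c • φ y) x = c * diverg φ x := by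
  have hd : DifferentiableAt ℝ φ x := (h.differentiable (by simp)) x
  unfold diverg
  rw [fderiv_fun_const_smul hd, Finset.mul_sum]
  rfl

/-- `TV_p` decreases in `p`: every test field for `TV_q` is one for `TV_p` when `p ≤ q`. -/
lemma TV_anti {N : ℕ} (hN : 1 ≤ N) {p q : ℝ≥0∞} (hp : 1 ≤ p) (hq : 1 ≤ q)
    (h : q.toReal⁻¹ ≤ p.toReal⁻¹) (u : (Fin N → ℝ) → ℝ) : TV N q u ≤ TV N p u := by
  obtain ⟨hp1, hp2⟩ := dualExp_spec hp
  obtain ⟨hq1, hq2⟩ := dualExp_spec hq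
  refine iSup₂_le fun φ hφ => ?_
  obtain ⟨a, b, c, d⟩ := hφ
  have : IsTest N p φ :=
    ⟨a, b, c, fun x => lpNorm_le_one_mono_s8 hN hq1 hp1 (by rw [hp2, hq2]; linarith) (d x)⟩
  exact le_iSup₂ (f := fun φ (_ : IsTest N p φ) =>
    ENNReal.ofReal (∫ x in Q N, u x * diverg φ x)) φ this

/-- `N^{-(1/p - 1/q)} TV_p ≤ TV_q` for `p ≤ q`: scaling a test field for `TV_p` by this factor
makes it one for `TV_q`. -/
lemma TV_scale {N : ℕ} (hN : 1 ≤ N) {p q : ℝ≥0∞} (hp : 1 ≤ p) (hq : 1 ≤ q)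
    (h : q.toReal⁻¹ ≤ p.toReal⁻¹) (u : (Fin N → ℝ) → ℝ) :
    ENNReal.ofReal ((N : ℝ) ^ (-(p.toReal⁻¹ - q.toReal⁻¹))) * TV N p u ≤ TV N q u := by
  obtain ⟨hp1, hp2⟩ := dualExp_spec hp
  obtain ⟨hq1, hq2⟩ := dualExp_spec hq
  set c := (N : ℝ) ^ (-(p.toReal⁻¹ - q.toReal⁻¹)) with hc
  have hc0 : 0 ≤ c := by positivity
  unfold TV
  simp only [ENNReal.mul_iSup]
  refine iSup₂_le fun φ hφ => ?_
  obtain ⟨a, b, c', d⟩ := hφ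
  have ht : IsTest N q (fun y => c • φ y) := by
    refine ⟨a.const_smul c, b.smul_left (f := fun _ => c), ?_, fun x => ?_⟩
    · exact (closure_mono (Function.support_const_smul_subset c φ)).trans c'
    · have := lpNorm_le_one_scale hN hq1 hp1 (by rw [hp2, hq2]; linarith) (d x)
      rw [hp2, hq2] at this
      convert this using 3
      rw [hc]
      congr 1
      ring
  refine le_trans (le_of_eq ?_) (le_iSup₂ (f := fun φ (_ : IsTest N q φ) =>
    ENNReal.ofReal (∫ x in Q N, u x * diverg φ x)) _ ht)
  simp only [diverg_smul a]
  rw [← ENNReal.ofReal_mul hc0, ← integral_const_mul]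
  congr 2
  ext x
  ring

lemma TV_convex {N : ℕ} (p : ℝ≥0∞) {u v : (Fin N → ℝ) → ℝ} (hu : IntegrableOn u (Q N))
    (hv : IntegrableOn v (Q N)) {s t : ℝ} (hs : 0 ≤ s) (ht : 0 ≤ t) :
    TV N p (s • u + t • v) ≤ ENNReal.ofReal s * TV N p u + ENNReal.ofReal t * TV N p v := by
  refine iSup₂_le fun φ hφ => ?_
  have hiu := integrable_mul_diverg hu hφ.1 hφ.2.1
  have hiv := integrable_mul_diverg hv hφ.1 hφ.2.1
  have e : ∫ x in Q N, (s • u + t • v) x * diverg φ x =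
      s * (∫ x in Q N, u x * diverg φ x) + t * ∫ x in Q N, v x * diverg φ x := by
    rw [← integral_const_mul, ← integral_const_mul,
      ← integral_add (hiu.const_mul s) (hiv.const_mul t)]
    congr 1
    ext x
    simp only [Pi.add_apply, Pi.smul_apply, smul_eq_mul]
    ring
  rw [e]
  refine ENNReal.ofReal_add_le.trans ?_
  rw [ENNReal.ofReal_mul hs, ENNReal.ofReal_mul ht]
  have hle : ∀ w : (Fin N → ℝ) → ℝ,
      ENNReal.ofReal (∫ x in Q N, w x * diverg φ x) ≤ TV N p w := fun w =>
    le_iSup₂ (f := fun φ (_ : IsTest N p φ) =>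
      ENNReal.ofReal (∫ x in Q N, w x * diverg φ x)) φ hφ
  gcongr <;> exact hle _

lemma TV_lt_top {N : ℕ} (hN : 1 ≤ N) {u : (Fin N → ℝ) → ℝ} (hu : MemBV N u) {p : ℝ≥0∞}
    (hp : 1 ≤ p) : TV N p u < ∞ := by
  have hN0 : (0 : ℝ) < N := by exact_mod_cast hN
  -- `TV_p ≤ TV_1`, and `TV_1` is bounded by a multiple of `TV_2`.
  refine (TV_anti hN le_rfl hp (by simpa using inv_toReal_le_one hp) u).trans_lt ?_
  have h2 := TV_scale hN (le_refl 1) (q := 2) (by norm_num) (by norm_num) u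
  have h3 := h2.trans_lt hu.2
  have h4 := ENNReal.lt_top_of_mul_ne_top_right h3.ne
    (by simpa using Real.rpow_pos_of_pos hN0 _)
  exact h4

lemma MemBV.convex {N : ℕ} {u v : (Fin N → ℝ) → ℝ} (hu : MemBV N u)
    (hv : MemBV N v) {s t : ℝ} (hs : 0 ≤ s) (ht : 0 ≤ t) : MemBV N (s • u + t • v) := by
  refine ⟨(hu.1.smul s).add (hv.1.smul t), (TV_convex 2 hu.1 hv.1 hs ht).trans_lt ?_⟩
  exact ENNReal.add_lt_top.2 ⟨ENNReal.mul_lt_top ENNReal.ofReal_lt_top hu.2,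
    ENNReal.mul_lt_top ENNReal.ofReal_lt_top hv.2⟩

/-! ### Strong convexity and the variational inequality -/

lemma eLpNorm_eq_sqrt {N : ℕ} {g : (Fin N → ℝ) → ℝ} (hg : MemLp g 2 (μQ N)) :
    eLpNorm g 2 (μQ N) = ENNReal.ofReal (√(∫ x, g x ^ 2 ∂(μQ N))) := by
  rw [hg.eLpNorm_eq_integral_rpow_norm (by norm_num) (by norm_num), Real.sqrt_eq_rpow]
  norm_num

lemma eLpNorm_sq {N : ℕ} {g : (Fin N → ℝ) → ℝ} (hg : MemLp g 2 (μQ N)) :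
    eLpNorm g 2 (μQ N) ^ 2 = ENNReal.ofReal (∫ x, g x ^ 2 ∂(μQ N)) := by
  rw [eLpNorm_eq_sqrt hg, ← ENNReal.ofReal_pow (Real.sqrt_nonneg _),
    Real.sq_sqrt (integral_nonneg fun x => sq_nonneg _)]

lemma rof_eq {N : ℕ} {f u : (Fin N → ℝ) → ℝ} {α : ℝ} (hα : 0 ≤ α) {p : ℝ≥0∞}
    (hu : MemLp (u - f) 2 (μQ N)) (ht : TV N p u < ∞) :
    rof N f α p u =
      ENNReal.ofReal ((∫ x, (u - f) x ^ 2 ∂(μQ N)) + α * (TV N p u).toReal) := by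
  rw [ENNReal.ofReal_add (integral_nonneg fun x => sq_nonneg _) (by positivity),
    ENNReal.ofReal_mul hα, ENNReal.ofReal_toReal ht.ne, rof, eLpNorm_sq hu]

lemma integral_convex_sq {N : ℕ} {g h : (Fin N → ℝ) → ℝ} (hg : MemLp g 2 (μQ N))
    (hh : MemLp h 2 (μQ N)) (t : ℝ) :
    ∫ x, ((1 - t) • g + t • h) x ^ 2 ∂(μQ N) =
      (1 - t) * (∫ x, g x ^ 2 ∂(μQ N)) + t * (∫ x, h x ^ 2 ∂(μQ N))
        - t * (1 - t) * ∫ x, (h - g) x ^ 2 ∂(μQ N) := by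
  have i1 := hg.integrable_sq
  have i2 := hh.integrable_sq
  have i3 := (hh.sub hg).integrable_sq
  have i4 : Integrable (fun x => (1 - t) * g x ^ 2 + t * h x ^ 2) (μQ N) :=
    (i1.const_mul _).add (i2.const_mul _)
  rw [← integral_const_mul, ← integral_const_mul, ← integral_const_mul,
    ← integral_add (i1.const_mul _) (i2.const_mul _), ← integral_sub i4 (i3.const_mul _)]
  congr 1
  ext x
  simp only [Pi.add_apply, Pi.smul_apply, smul_eq_mul, Pi.sub_apply]
  ring

/-- The quadratic growth of the ROF functional around its minimizer, with constant `1`. -/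
lemma minimizer_variational {N : ℕ} (hN : 1 ≤ N) {f u v : (Fin N → ℝ) → ℝ} {α : ℝ} (hα : 0 ≤ α)
    {p : ℝ≥0∞} (hp : 1 ≤ p) (hu : IsMinimizer N f α p u)
    (hu2 : MemLp (u - f) 2 (μQ N)) (hv : MemBV N v) (hv2 : MemLp (v - f) 2 (μQ N)) :
    (∫ x, (u - f) x ^ 2 ∂(μQ N)) + α * (TV N p u).toReal + ∫ x, (v - u) x ^ 2 ∂(μQ N) ≤
      (∫ x, (v - f) x ^ 2 ∂(μQ N)) + α * (TV N p v).toReal := by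
  have tu := TV_lt_top hN hu.1 hp
  have tv := TV_lt_top hN hv hp
  set D := ∫ x, (v - u) x ^ 2 ∂(μQ N) with hD
  -- Minimality against `(1 - t) u + t v`, to be divided by `t` before letting `t → 0`.
  have step : ∀ t : ℝ, 0 < t → t < 1 →
      (∫ x, (u - f) x ^ 2 ∂(μQ N)) + α * (TV N p u).toReal + (1 - t) * D ≤
      (∫ x, (v - f) x ^ 2 ∂(μQ N)) + α * (TV N p v).toReal := by
    intro t h0 h1
    have hw : MemBV N ((1 - t) • u + t • v) := hu.1.convex hv (by linarith) h0.le
    have tw := TV_lt_top hN hw hp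
    have ew : (1 - t) • u + t • v - f = (1 - t) • (u - f) + t • (v - f) := by
      ext x
      simp only [Pi.add_apply, Pi.smul_apply, smul_eq_mul, Pi.sub_apply]
      ring
    have hw2 : MemLp ((1 - t) • u + t • v - f) 2 (μQ N) := by
      rw [ew]
      exact (hu2.const_smul _).add (hv2.const_smul _)
    have hm := hu.2 _ hw
    rw [rof_eq hα hu2 tu, rof_eq hα hw2 tw, ENNReal.ofReal_le_ofReal_iff
      (add_nonneg (integral_nonneg fun x => sq_nonneg _) (by positivity)), ew,
      integral_convex_sq hu2 hv2, show v - f - (u - f) = v - u by abel, ← hD] at hm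
    have hc : (TV N p ((1 - t) • u + t • v)).toReal ≤
        (1 - t) * (TV N p u).toReal + t * (TV N p v).toReal := by
      have h5 := TV_convex p hu.1.1 hv.1 (sub_nonneg.2 h1.le) h0.le
      have h6 := ENNReal.toReal_mono (ENNReal.add_lt_top.2
        ⟨ENNReal.mul_lt_top ENNReal.ofReal_lt_top tu,
          ENNReal.mul_lt_top ENNReal.ofReal_lt_top tv⟩).ne h5
      rwa [ENNReal.toReal_add (ENNReal.mul_lt_top ENNReal.ofReal_lt_top tu).ne
        (ENNReal.mul_lt_top ENNReal.ofReal_lt_top tv).ne, ENNReal.toReal_mul, ENNReal.toReal_mul,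
        ENNReal.toReal_ofReal (sub_nonneg.2 h1.le), ENNReal.toReal_ofReal h0.le] at h6
    have hc' := mul_le_mul_of_nonneg_left hc hα
    refine le_of_mul_le_mul_left ?_ h0
    nlinarith
  have hlim : Tendsto (fun t : ℝ => (∫ x, (u - f) x ^ 2 ∂(μQ N)) + α * (TV N p u).toReal
      + (1 - t) * D) (𝓝[>] 0) (𝓝 ((∫ x, (u - f) x ^ 2 ∂(μQ N)) + α * (TV N p u).toReal
      + (1 - 0) * D)) := by
    refine Tendsto.mono_left (Continuous.tendsto ?_ 0) nhdsWithin_le_nhds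
    fun_prop
  have hfin := le_of_tendsto hlim (by
    filter_upwards [Ioo_mem_nhdsGT (zero_lt_one' ℝ)] with t ht using step t ht.1 ht.2)
  simpa using hfin

/-- The properties of a ROF reconstruction that enter the estimate, uniformly in `α > 0` and in the
degenerate case `α = 0`, `u = f`. -/
lemma rof_variational {N : ℕ} (hN : 1 ≤ N) {f u : (Fin N → ℝ) → ℝ} (hf : MemBV N f) {α : ℝ}
    {p : ℝ≥0∞} (hp : 1 ≤ p) (h : (α = 0 ∧ u = f) ∨ (0 < α ∧ IsMinimizer N f α p u)) :
    MemBV N u ∧ MemLp (u - f) 2 (μQ N) ∧ (TV N p u).toReal ≤ (TV N p f).toReal ∧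
    ∀ v, MemBV N v → MemLp (v - f) 2 (μQ N) →
    (∫ x, (u - f) x ^ 2 ∂(μQ N)) + α * (TV N p u).toReal + ∫ x, (v - u) x ^ 2 ∂(μQ N) ≤
      (∫ x, (v - f) x ^ 2 ∂(μQ N)) + α * (TV N p v).toReal := by
  have hff : MemLp (f - f) 2 (μQ N) := by
    rw [sub_self]
    exact MemLp.zero
  rcases h with ⟨rfl, rfl⟩ | ⟨hα, hu⟩
  · exact ⟨hf, hff, le_rfl, fun v _ _ => by simp⟩
  · -- Comparison with `f` shows that the fidelity term of the minimizer is finite.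
    have hu2 : MemLp (u - f) 2 (μQ N) := by
      refine ⟨(hu.1.1.sub hf.1).aestronglyMeasurable, ?_⟩
      have h1 := hu.2 f hf
      rw [rof_eq hα.le hff (TV_lt_top hN hf hp)] at h1
      have h2 : eLpNorm (u - f) 2 (μQ N) ^ 2 < ∞ :=
        (le_self_add.trans h1).trans_lt ENNReal.ofReal_lt_top
      exact (ENNReal.pow_lt_top_iff.1 h2).resolve_right (by norm_num)
    have hvar := fun v hv hv2 => minimizer_variational (v := v) hN hα.le hp hu hu2 hv hv2
    refine ⟨hu.1, hu2, ?_, hvar⟩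
    have h1 := hvar f hf hff
    have h2 : 0 ≤ ∫ x, (u - f) x ^ 2 ∂(μQ N) := integral_nonneg fun x => sq_nonneg _
    have h3 : 0 ≤ ∫ x, (f - u) x ^ 2 ∂(μQ N) := integral_nonneg fun x => sq_nonneg _
    have h4 : ∫ x, (f - f) x ^ 2 ∂(μQ N) = 0 := by simp
    rw [h4] at h1
    exact le_of_mul_le_mul_left (by linarith) hα

/-! ### The stability estimate -/

/-- The real-number bookkeeping: `D = ‖u₂ - u₁‖²`, `gᵢ = ‖uᵢ - f‖²`, `aᵢⱼ = TV_{pᵢ}(uⱼ)` and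
`T = TV_1(f)`. -/
lemma stability_arith {α₁ α₂ A c T D g₁ g₂ a₁₁ a₁₂ a₂₁ a₂₂ : ℝ} (h10 : 0 ≤ α₁) (h1A : α₁ ≤ A)
    (h20 : 0 ≤ α₂) (h2A : α₂ ≤ A) (hc0 : 0 < c) (hc1 : c ≤ 1)
    (hT : 0 ≤ T) (p12 : 0 ≤ a₁₂) (p11 : 0 ≤ a₁₁)
    (hD : 2 * D ≤ α₁ * (a₁₂ - a₁₁) + α₂ * (a₂₁ - a₂₂)) (hDg : D ≤ 2 * g₁ + 2 * g₂)
    (hg₁ : 2 * g₁ ≤ α₁ * T) (hg₂ : 2 * g₂ ≤ α₂ * T) (h11 : a₁₁ ≤ T) (h22 : a₂₂ ≤ T)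
    (h21 : a₂₁ ≤ a₁₁) (hc2 : c * a₁₂ ≤ a₂₂) :
    D ≤ (|α₁ - α₂| + 4 * (A * (1 - c))) * T := by
  have hA : 0 ≤ A := h10.trans h1A
  rcases le_total c (1 / 2) with hc | hc
  · have e1 : D ≤ 2 * (A * T) := by nlinarith
    have e2 : 2 * (A * T) ≤ 4 * (A * (1 - c)) * T := by
      have : 0 ≤ A * T := by positivity
      nlinarith
    have : 0 ≤ |α₁ - α₂| * T := by positivity
    linarith
  · have e0 : a₁₂ ≤ 2 * T := by nlinarith
    have e1 : 2 * D ≤ (α₁ - α₂) * (a₁₂ - a₁₁) + α₂ * (1 - c) * a₁₂ := by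
      have k1 := mul_le_mul_of_nonneg_left h21 h20
      have k2 := mul_le_mul_of_nonneg_left hc2 h20
      linarith
    have hAc : 0 ≤ A * (1 - c) := mul_nonneg hA (by linarith)
    have e2 : α₂ * (1 - c) * a₁₂ ≤ A * (1 - c) * (2 * T) := by
      have : 0 ≤ 1 - c := by linarith
      gcongr
    have e3 : (α₁ - α₂) * (a₁₂ - a₁₁) ≤ |α₁ - α₂| * (2 * T) := by
      refine (le_abs_self _).trans ?_
      rw [abs_mul]
      gcongr
      rw [abs_le]
      constructor <;> linarith
    have : 0 ≤ A * (1 - c) * T := by positivity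
    linarith

/-- The estimate under the normalization `p₁ ≤ p₂`. -/
lemma stability_aux (N : ℕ) (hN : 1 ≤ N)
    (f : (Fin N → ℝ) → ℝ) (hf : MemBV N f) (A : ℝ)
    (α₁ α₂ : ℝ) (p₁ p₂ : ℝ≥0∞)
    (hα₁ : α₁ ∈ Set.Icc 0 A) (hα₂ : α₂ ∈ Set.Icc 0 A)
    (hp₁ : 1 ≤ p₁) (hp₂ : 1 ≤ p₂) (hp : p₂.toReal⁻¹ ≤ p₁.toReal⁻¹)
    (u₁ u₂ : (Fin N → ℝ) → ℝ)
    (h₁ : (α₁ = 0 ∧ u₁ = f) ∨ (0 < α₁ ∧ IsMinimizer N f α₁ p₁ u₁))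
    (h₂ : (α₂ = 0 ∧ u₂ = f) ∨ (0 < α₂ ∧ IsMinimizer N f α₂ p₂ u₂)) :
    eLpNorm (u₂ - u₁) 2 (μQ N) ≤
      (ENNReal.ofReal |α₁ - α₂| ^ ((1 : ℝ)/2) +
          2 * (ENNReal.ofReal A *
            ENNReal.ofReal (1 - (N : ℝ) ^ (-|p₂.toReal⁻¹ - p₁.toReal⁻¹|))) ^ ((1 : ℝ)/2)) *
        TV N 1 f ^ ((1 : ℝ)/2) := by
  obtain ⟨b1, m1, t1, v1⟩ := rof_variational hN hf hp₁ h₁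
  obtain ⟨b2, m2, t2, v2⟩ := rof_variational hN hf hp₂ h₂
  have hN1 : (1 : ℝ) ≤ N := by exact_mod_cast hN
  have hA : 0 ≤ A := hα₁.1.trans hα₁.2
  rw [abs_of_nonpos (sub_nonpos.2 hp), neg_sub]
  set c := (N : ℝ) ^ (-(p₁.toReal⁻¹ - p₂.toReal⁻¹)) with hc
  have hc0 : 0 < c := Real.rpow_pos_of_pos (by linarith) _
  have hc1 : c ≤ 1 := Real.rpow_le_one_of_one_le_of_nonpos hN1 (by linarith)
  have hTf := TV_lt_top hN hf (le_refl 1)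
  set T := (TV N 1 f).toReal with hT
  have hT0 : 0 ≤ T := ENNReal.toReal_nonneg
  have anti : ∀ {q : ℝ≥0∞}, 1 ≤ q → (TV N q f).toReal ≤ T := fun hq =>
    ENNReal.toReal_mono hTf.ne (TV_anti hN le_rfl hq (by simpa using inv_toReal_le_one hq) f)
  have hff : MemLp (f - f) 2 (μQ N) := by
    rw [sub_self]
    exact MemLp.zero
  have hff0 : ∫ x, (f - f) x ^ 2 ∂(μQ N) = 0 := by simp
  have comm : ∀ g h : (Fin N → ℝ) → ℝ,
      ∫ x, (g - h) x ^ 2 ∂(μQ N) = ∫ x, (h - g) x ^ 2 ∂(μQ N) := fun g h => by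
    congr 1
    ext x
    simp only [Pi.sub_apply]
    ring
  have m : MemLp (u₂ - u₁) 2 (μQ N) := by
    have := m2.sub m1
    rwa [sub_sub_sub_cancel_right] at this
  have hDg : ∫ x, (u₂ - u₁) x ^ 2 ∂(μQ N) ≤
      2 * (∫ x, (u₁ - f) x ^ 2 ∂(μQ N)) + 2 * ∫ x, (u₂ - f) x ^ 2 ∂(μQ N) := by
    rw [← integral_const_mul, ← integral_const_mul,
      ← integral_add (m1.integrable_sq.const_mul _) (m2.integrable_sq.const_mul _)]
    refine integral_mono m.integrable_sq
      ((m1.integrable_sq.const_mul _).add (m2.integrable_sq.const_mul _)) fun x => ?_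
    simp only [Pi.sub_apply]
    nlinarith [sq_nonneg (u₁ x - f x + (u₂ x - f x))]
  have w1 := v1 f hf hff
  have w2 := v2 f hf hff
  have w12 := v1 u₂ b2 m2
  have w21 := v2 u₁ b1 m1
  rw [comm f, hff0] at w1 w2
  rw [comm u₁ u₂] at w21
  have h21 : (TV N p₂ u₁).toReal ≤ (TV N p₁ u₁).toReal :=
    ENNReal.toReal_mono (TV_lt_top hN b1 hp₁).ne (TV_anti hN hp₁ hp₂ hp u₁)
  have hc2 : c * (TV N p₁ u₂).toReal ≤ (TV N p₂ u₂).toReal := by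
    have := ENNReal.toReal_mono (TV_lt_top hN b2 hp₂).ne (TV_scale hN hp₁ hp₂ hp u₂)
    rwa [ENNReal.toReal_mul, ENNReal.toReal_ofReal hc0.le] at this
  have q1 := mul_le_mul_of_nonneg_left (anti hp₁) hα₁.1
  have q2 := mul_le_mul_of_nonneg_left (anti hp₂) hα₂.1
  have n1 : 0 ≤ α₁ * (TV N p₁ u₁).toReal := mul_nonneg hα₁.1 ENNReal.toReal_nonneg
  have n2 : 0 ≤ α₂ * (TV N p₂ u₂).toReal := mul_nonneg hα₂.1 ENNReal.toReal_nonneg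
  have main := stability_arith hα₁.1 hα₁.2 hα₂.1 hα₂.2 hc0 hc1 hT0
    (a₁₂ := (TV N p₁ u₂).toReal) (a₁₁ := (TV N p₁ u₁).toReal) (a₂₁ := (TV N p₂ u₁).toReal)
    (a₂₂ := (TV N p₂ u₂).toReal)
    ENNReal.toReal_nonneg ENNReal.toReal_nonneg (by linarith) hDg (by linarith) (by linarith)
    (t1.trans (anti hp₁)) (t2.trans (anti hp₂)) h21 hc2
  have hAc : 0 ≤ A * (1 - c) := mul_nonneg hA (by linarith)
  have hsq : √(∫ x, (u₂ - u₁) x ^ 2 ∂(μQ N)) ≤ (√|α₁ - α₂| + 2 * √(A * (1 - c))) * √T := by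
    rw [Real.sqrt_le_left (by positivity), mul_pow, Real.sq_sqrt hT0]
    refine main.trans (mul_le_mul_of_nonneg_right ?_ hT0)
    have k1 := Real.sq_sqrt (abs_nonneg (α₁ - α₂))
    have k2 := Real.sq_sqrt hAc
    have k3 : 0 ≤ √|α₁ - α₂| * √(A * (1 - c)) := by positivity
    nlinarith
  rw [eLpNorm_eq_sqrt m, ← ENNReal.ofReal_toReal hTf.ne, ← hT, ← ENNReal.ofReal_mul hA,
    ENNReal.ofReal_rpow_of_nonneg (abs_nonneg _) (by norm_num),
    ENNReal.ofReal_rpow_of_nonneg hAc (by norm_num),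
    ENNReal.ofReal_rpow_of_nonneg hT0 (by norm_num),
    ← Real.sqrt_eq_rpow, ← Real.sqrt_eq_rpow, ← Real.sqrt_eq_rpow,
    show (2 : ℝ≥0∞) = ENNReal.ofReal 2 by simp, ← ENNReal.ofReal_mul (by norm_num),
    ← ENNReal.ofReal_add (by positivity) (by positivity), ← ENNReal.ofReal_mul (by positivity)]
  exact ENNReal.ofReal_le_ofReal hsq

/-- A Lipschitz-type estimate for ROF reconstructions in `(α,p)`:
for `(α₁,p₁), (α₂,p₂) ∈ [0,A] × [1,∞]` (with `u_{0,p} := u_η`),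
`‖u_{α₂,p₂} − u_{α₁,p₁}‖_{L²} ≤ (|α₁−α₂|^{1/2} + 2 (A(1−N^{−|1/p₂−1/p₁|}))^{1/2}) (TV_1(u_η))^{1/2}`. -/
theorem rof_joint_stability (N : ℕ) (hN : 1 ≤ N)
    (uη : (Fin N → ℝ) → ℝ) (huη : MemBV N uη) (A : ℝ) (hA : 0 < A)
    (α₁ α₂ : ℝ) (p₁ p₂ : ℝ≥0∞)
    (hα₁ : α₁ ∈ Set.Icc 0 A) (hα₂ : α₂ ∈ Set.Icc 0 A)
    (hp₁ : 1 ≤ p₁) (hp₂ : 1 ≤ p₂)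
    (u₁ u₂ : (Fin N → ℝ) → ℝ)
    (h₁ : (α₁ = 0 ∧ u₁ = uη) ∨ (0 < α₁ ∧ IsMinimizer N uη α₁ p₁ u₁))
    (h₂ : (α₂ = 0 ∧ u₂ = uη) ∨ (0 < α₂ ∧ IsMinimizer N uη α₂ p₂ u₂)) :
    eLpNorm (u₂ - u₁) 2 (μQ N) ≤
      (ENNReal.ofReal |α₁ - α₂| ^ ((1 : ℝ)/2) +
          2 * (ENNReal.ofReal A *
            ENNReal.ofReal (1 - (N : ℝ) ^ (-|p₂.toReal⁻¹ - p₁.toReal⁻¹|))) ^ ((1 : ℝ)/2)) *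
        TV N 1 uη ^ ((1 : ℝ)/2) := by
  rcases le_total p₂.toReal⁻¹ p₁.toReal⁻¹ with hp | hp
  · exact stability_aux N hN uη huη A α₁ α₂ p₁ p₂ hα₁ hα₂ hp₁ hp₂ hp u₁ u₂ h₁ h₂
  · have := stability_aux N hN uη huη A α₂ α₁ p₂ p₁ hα₂ hα₁ hp₂ hp₁ hp u₂ u₁ h₂ h₁
    rwa [eLpNorm_sub_comm, abs_sub_comm α₂, abs_sub_comm p₁.toReal⁻¹] at this

end
end
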